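/- Let d ≥ 3 and 1 < p ≤ d/(d-2), and let q be the conjugate exponent (1/p + 1/q = 1), so that d ≤ 2q. Then χ_{d,p} = inf{ (1/2)‖∇ψ‖₂² : ψ ∈ H¹(ℝ^d), ‖ψ‖₂ = 1 = ‖ψ‖_{2p} } is strictly positive. -/

import Mathlib

open MeasureTheory

noncomputable def gradNormSq {d : ℕ} (ψ : (Fin d → ℝ) → ℝ) (x : Fin d → ℝ) : ℝ :=
  ∑ i, (fderiv ℝ ψ x (Pi.single i 1)) ^ 2

def chiSet (d : ℕ) (p : ℝ) : Set ℝ :=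
  {E | ∃ ψ : (Fin d → ℝ) → ℝ, Differentiable ℝ ψ ∧
    Integrable (fun x => ψ x ^ 2) ∧ Integrable (gradNormSq ψ) ∧
    Integrable (fun x => |ψ x| ^ (2 * p)) ∧
    (∫ x, ψ x ^ 2) = 1 ∧ (∫ x, |ψ x| ^ (2 * p)) = 1 ∧
    E = (1 / 2) * ∫ x, gradNormSq ψ x}

/-- A differentiable function on the line which is dominated, together with its derivative, by `f`
is bounded by the integral of `f`. -/
lemma enorm_le_lintegral_of_hasDerivAt {v v' : ℝ → ℝ} (hv : ∀ t, HasDerivAt v (v' t) t)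
    {f : ℝ → ENNReal} {C : ENNReal} (hC : C ≠ ⊤) (hfv : ∀ t, ‖v t‖ₑ ≤ C * f t)
    (hfd : ∀ t, ‖v' t‖ₑ ≤ f t) (t : ℝ) : ‖v t‖ₑ ≤ ∫⁻ s, f s := by
  by_cases hf : ∫⁻ s, f s = ⊤
  · simp [hf]
  have hv'_eq : v' = deriv v := funext fun s => (hv s).deriv.symm
  have hv_cont : Continuous v :=
    continuous_iff_continuousAt.2 fun s => (hv s).continuousAt
  have hv_int : Integrable v := by
    refine ⟨hv_cont.aestronglyMeasurable, ?_⟩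
    calc ∫⁻ s, ‖v s‖ₑ ≤ ∫⁻ s, C * f s := lintegral_mono hfv
      _ = C * ∫⁻ s, f s := lintegral_const_mul' _ _ hC
      _ < ⊤ := ENNReal.mul_lt_top hC.lt_top (lt_top_iff_ne_top.2 hf)
  have hv'_int : Integrable v' := by
    refine ⟨?_, (lintegral_mono hfd).trans_lt (lt_top_iff_ne_top.2 hf)⟩
    rw [hv'_eq]
    exact (measurable_deriv v).aestronglyMeasurable
  have hlim := tendsto_zero_of_hasDerivAt_of_integrableOn_Iic (a := t) (fun s _ => hv s)
    hv'_int.integrableOn hv_int.integrableOn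
  have hftc := integral_Iic_of_hasDerivAt_of_tendsto (a := t) hv_cont.continuousWithinAt
    (fun s _ => hv s) hv'_int.integrableOn hlim
  rw [sub_zero] at hftc
  calc ‖v t‖ₑ = ‖∫ s in Set.Iic t, v' s‖ₑ := by rw [hftc]
    _ ≤ ∫⁻ s in Set.Iic t, ‖v' s‖ₑ := enorm_integral_le_lintegral_enorm _
    _ ≤ ∫⁻ s, ‖v' s‖ₑ := setLIntegral_le_lintegral _ _
    _ ≤ ∫⁻ s, f s := lintegral_mono hfd

/-- The Gagliardo–Nirenberg inequality for a differentiable function which is dominated, together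
with its partial derivatives, by `f`; neither continuity of the derivative nor compactness of the
support is required. -/
lemma lintegral_enorm_rpow_le_of_dominated {ι : Type*} [Fintype ι] [DecidableEq ι] {r : ℝ}
    (hr : (Fintype.card ι : ℝ).HolderConjugate r) {u : (ι → ℝ) → ℝ} (hu : Differentiable ℝ u)
    {f : (ι → ℝ) → ENNReal} (hf : Measurable f) {C : ENNReal} (hC : C ≠ ⊤)
    (hfu : ∀ x, ‖u x‖ₑ ≤ C * f x) (hfd : ∀ x i, ‖fderiv ℝ u x (Pi.single i 1)‖ₑ ≤ f x) :
    ∫⁻ x, ‖u x‖ₑ ^ r ≤ (∫⁻ x, f x) ^ r := by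
  have hcard : (0 : ℝ) < Fintype.card ι - 1 := sub_pos.2 hr.lt
  have hline (x : ι → ℝ) (i : ι) : ‖u x‖ₑ ≤ ∫⁻ t, f (Function.update x i t) := by
    have := enorm_le_lintegral_of_hasDerivAt
      (fun t => (hu (Function.update x i t)).hasFDerivAt.comp_hasDerivAt t
        (hasDerivAt_update x i t)) hC (fun t => hfu _) (fun t => hfd _ i) (x i)
    simpa using this
  calc ∫⁻ x, ‖u x‖ₑ ^ r
      = ∫⁻ x, ∏ _i : ι, ‖u x‖ₑ ^ (1 / ((Fintype.card ι : ℝ) - 1)) := by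
        congr! 2 with x
        rw [Finset.prod_const, ← ENNReal.rpow_natCast, ← ENNReal.rpow_mul, hr.conjugate_eq,
          Finset.card_univ]
        congr 1
        field_simp
    _ ≤ ∫⁻ x, ∏ i, (∫⁻ t, f (Function.update x i t)) ^ (1 / ((Fintype.card ι : ℝ) - 1)) := by
        gcongr with x i
        exact hline x i
    _ ≤ (∫⁻ x, f x) ^ r := lintegral_prod_lintegral_pow_le _ hr hf

/-- If the second and the `a`-th moment of a function are `1`, its higher moments are at
least `1`. -/
lemma one_le_lintegral_rpow {α : Type*} [MeasurableSpace α] {μ : Measure α} {g : α → ℝ}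
    (hg0 : ∀ x, 0 ≤ g x) {a s : ℝ} (ha : 2 < a) (has : a ≤ s)
    (h2 : ∫⁻ x, ENNReal.ofReal (g x ^ (2 : ℝ)) ∂μ = 1)
    (h2m : AEMeasurable (fun x => ENNReal.ofReal (g x ^ (2 : ℝ))) μ)
    (h1 : ∫⁻ x, ENNReal.ofReal (g x ^ a) ∂μ = 1) :
    1 ≤ ∫⁻ x, ENNReal.ofReal (g x ^ s) ∂μ := by
  set θ : ℝ := (a - 2) / (s - 2) with hθ
  have hs : 0 < s - 2 := by linarith
  have hθ0 : 0 < θ := div_pos (by linarith) hs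
  have hθ1 : θ ≤ 1 := (div_le_one hs).2 (by linarith)
  have hexp : s * θ + 2 * (1 - θ) = a := by
    rw [hθ]; field_simp; ring
  have hpt (x : α) : ENNReal.ofReal (g x ^ a) ≤ ENNReal.ofReal θ * ENNReal.ofReal (g x ^ s) +
      ENNReal.ofReal (1 - θ) * ENNReal.ofReal (g x ^ (2 : ℝ)) := by
    have hgx := hg0 x
    rw [← ENNReal.ofReal_mul hθ0.le, ← ENNReal.ofReal_mul (by linarith),
      ← ENNReal.ofReal_add (by positivity) (mul_nonneg (by linarith) (by positivity))]
    apply ENNReal.ofReal_le_ofReal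
    have := Real.geom_mean_le_arith_mean2_weighted hθ0.le (sub_nonneg.2 hθ1)
      (Real.rpow_nonneg hgx s) (Real.rpow_nonneg hgx 2) (by ring)
    rwa [← Real.rpow_mul hgx, ← Real.rpow_mul hgx, ← Real.rpow_add_of_nonneg hgx
      (mul_nonneg (by linarith) hθ0.le) (by linarith), hexp] at this
  have hint := lintegral_mono (μ := μ) hpt
  rw [lintegral_add_right' _ (h2m.const_mul _), lintegral_const_mul' _ _ ENNReal.ofReal_ne_top,
    lintegral_const_mul' _ _ ENNReal.ofReal_ne_top, h1, h2, mul_one] at hint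
  by_contra! hlt
  have : ENNReal.ofReal θ * ∫⁻ x, ENNReal.ofReal (g x ^ s) ∂μ + ENNReal.ofReal (1 - θ) <
      ENNReal.ofReal θ * 1 + ENNReal.ofReal (1 - θ) := by
    refine ENNReal.add_lt_add_right ENNReal.ofReal_ne_top ?_
    exact ENNReal.mul_lt_mul_right (ENNReal.ofReal_pos.2 hθ0).ne' ENNReal.ofReal_ne_top hlt
  rw [mul_one, ← ENNReal.ofReal_add hθ0.le (by linarith), add_sub_cancel, ENNReal.ofReal_one]
    at this
  exact absurd hint this.not_ge

lemma abs_fderiv_single_le_sqrt_gradNormSq {d : ℕ} (ψ : (Fin d → ℝ) → ℝ) (x : Fin d → ℝ)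
    (i : Fin d) : |fderiv ℝ ψ x (Pi.single i 1)| ≤ √(gradNormSq ψ x) := by
  apply Real.abs_le_sqrt
  exact Finset.single_le_sum (f := fun i => (fderiv ℝ ψ x (Pi.single i 1)) ^ 2)
    (fun j _ => sq_nonneg _) (Finset.mem_univ i)

lemma gradNormSq_nonneg {d : ℕ} (ψ : (Fin d → ℝ) → ℝ) (x : Fin d → ℝ) : 0 ≤ gradNormSq ψ x :=
  Finset.sum_nonneg fun _ _ => sq_nonneg _

lemma measurable_gradNormSq {d : ℕ} (ψ : (Fin d → ℝ) → ℝ) : Measurable (gradNormSq ψ) :=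
  Finset.measurable_fun_sum _ fun i _ =>
    (measurable_fderiv_apply_const ℝ ψ (Pi.single i 1)).pow_const 2

lemma le_of_mem_chiSet {d : ℕ} (hd : 3 ≤ d) {p : ℝ} (hp : 1 < p)
    (hpd : p ≤ (d : ℝ) / ((d : ℝ) - 2)) {E : ℝ} (hE : E ∈ chiSet d p) :
    1 / (8 * (p + 1) ^ 2) ≤ E := by
  obtain ⟨ψ, hψ, hi2, hig, hip, h2, h2p, rfl⟩ := hE
  have hd' : (3 : ℝ) ≤ d := by exact_mod_cast hd
  have hψc : Continuous ψ := hψ.continuous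
  set u : (Fin d → ℝ) → ℝ := fun x => |ψ x| ^ (p + 1) with hu
  set F : (Fin d → ℝ) → ℝ := fun x =>
    (1 / 4) * ψ x ^ 2 + (1 / 2) * |ψ x| ^ (2 * p) + (p + 1) ^ 2 * gradNormSq ψ x with hF
  have hsq (x) : (|ψ x| ^ p) ^ 2 = |ψ x| ^ (2 * p) := by
    rw [← Real.rpow_natCast, ← Real.rpow_mul (abs_nonneg _)]; push_cast; ring_nf
  have hF0 (x) : 0 ≤ F x := by
    have := gradNormSq_nonneg ψ x
    positivity
  have hFm : Measurable F := by
    have := measurable_gradNormSq ψ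
    have := hψc.measurable
    fun_prop
  have hFi : Integrable F := ((hi2.const_mul _).add (hip.const_mul _)).add (hig.const_mul _)
  have hud : Differentiable ℝ u := hψ.norm_rpow (by linarith)
  have huF (x) : ‖u x‖ₑ ≤ 2 * ENNReal.ofReal (F x) := by
    rw [show (2 : ENNReal) = ENNReal.ofReal 2 by simp, ← ENNReal.ofReal_mul (by norm_num),
      ← ofReal_norm]
    apply ENNReal.ofReal_le_ofReal
    have hg := gradNormSq_nonneg ψ x
    have : u x = |ψ x| ^ p * |ψ x| := Real.rpow_add_one' (abs_nonneg _) (by linarith)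
    rw [this, Real.norm_of_nonneg (by positivity), hF]
    simp only [← hsq, ← sq_abs (ψ x)]
    nlinarith [sq_nonneg (|ψ x| ^ p - |ψ x|), mul_nonneg (sq_nonneg (p + 1)) hg,
      sq_nonneg (|ψ x| ^ p)]
  have hdF (x i) : ‖fderiv ℝ u x (Pi.single i 1)‖ₑ ≤ ENNReal.ofReal (F x) := by
    rw [← ofReal_norm]
    apply ENNReal.ofReal_le_ofReal
    have hder := (hasDerivAt_abs_rpow (ψ x) (p := p + 1) (by linarith)).comp_hasFDerivAt x
      (hψ x).hasFDerivAt
    have hfd : fderiv ℝ u x = ((p + 1) * |ψ x| ^ (p + 1 - 2) * ψ x) • fderiv ℝ ψ x :=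
      hder.fderiv
    have habs : ‖(p + 1) * |ψ x| ^ (p + 1 - 2) * ψ x‖ = (p + 1) * |ψ x| ^ p := by
      rw [norm_mul, Real.norm_of_nonneg (mul_nonneg (by linarith) (by positivity)),
        Real.norm_eq_abs, mul_assoc, ← Real.rpow_add_one' (abs_nonneg _) (by linarith)]
      ring_nf
    rw [hfd, smul_apply, norm_smul, habs]
    have hle := abs_fderiv_single_le_sqrt_gradNormSq ψ x i
    have hS := Real.sq_sqrt (gradNormSq_nonneg ψ x)
    have hS0 := Real.sqrt_nonneg (gradNormSq ψ x)
    rw [Real.norm_eq_abs, hF]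
    simp only [← hsq]
    set S := √(gradNormSq ψ x)
    have hP : 0 ≤ |ψ x| ^ p := by positivity
    calc (p + 1) * |ψ x| ^ p * |fderiv ℝ ψ x (Pi.single i 1)|
        ≤ (p + 1) * |ψ x| ^ p * S := by gcongr
      _ ≤ _ := by
        rw [← hS]
        nlinarith [sq_nonneg (|ψ x| ^ p / 2 - (p + 1) * S), sq_nonneg (ψ x), sq_nonneg (|ψ x| ^ p)]
  have hconj : (Fintype.card (Fin d) : ℝ).HolderConjugate ((d : ℝ) / (d - 1)) := by
    rw [Fintype.card_fin]
    exact Real.HolderConjugate.conjExponent (by linarith)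
  have hr0 : 0 < (d : ℝ) / (d - 1) := div_pos (by linarith) (by linarith)
  have hGN := lintegral_enorm_rpow_le_of_dominated hconj hud hFm.ennreal_ofReal
    (C := 2) (by simp) huF hdF
  have hs : 2 * p ≤ (p + 1) * ((d : ℝ) / (d - 1)) := by
    rw [le_div_iff₀ (by linarith)] at hpd
    rw [← mul_div_assoc, le_div_iff₀ (by linarith)]
    nlinarith
  have hlow : 1 ≤ ∫⁻ x, ‖u x‖ₑ ^ ((d : ℝ) / (d - 1)) := by
    have h2m : ∀ x, |ψ x| ^ (2 : ℝ) = ψ x ^ 2 := fun x => by simp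
    have := one_le_lintegral_rpow (μ := volume) (fun x => abs_nonneg (ψ x)) (a := 2 * p)
      (by linarith) hs
      (by simp_rw [h2m]
          rw [← ofReal_integral_eq_lintegral_ofReal hi2 (.of_forall fun x => sq_nonneg _), h2,
            ENNReal.ofReal_one])
      (by have := hψc.measurable; fun_prop)
      (by rw [← ofReal_integral_eq_lintegral_ofReal hip (.of_forall fun x => by positivity), h2p,
            ENNReal.ofReal_one])
    refine this.trans_eq ?_
    congr! 2 with x
    rw [← ofReal_norm, Real.norm_of_nonneg (by positivity),
      ENNReal.ofReal_rpow_of_nonneg (by positivity) hr0.le, Real.rpow_mul (abs_nonneg _)]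
  have hone : 1 ≤ ∫⁻ x, ENNReal.ofReal (F x) := by
    by_contra! hlt
    exact absurd (hlow.trans hGN) (ENNReal.rpow_lt_one hlt hr0).not_ge
  rw [← ofReal_integral_eq_lintegral_ofReal hFi (.of_forall hF0), ENNReal.one_le_ofReal] at hone
  have hFint : ∫ x, F x = 1 / 4 + 1 / 2 + (p + 1) ^ 2 * ∫ x, gradNormSq ψ x := by
    simp only [hF]
    have hi := (hi2.const_mul (1 / 4)).add (hip.const_mul (1 / 2))
    rw [integral_add (f := fun x => (1 / 4) * ψ x ^ 2 + (1 / 2) * |ψ x| ^ (2 * p)) hi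
        (hig.const_mul _), integral_add (hi2.const_mul _) (hip.const_mul _), integral_const_mul, integral_const_mul,
      integral_const_mul, h2, h2p]
    ring
  rw [hFint] at hone
  rw [div_le_iff₀ (by positivity)]
  linarith

lemma chiSet_nonempty {d : ℕ} (hd : d ≠ 0) {p : ℝ} (hp : 1 < p) : (chiSet d p).Nonempty := by
  let φ : ContDiffBump (0 : Fin d → ℝ) := default
  have hφ : ContDiff ℝ 1 φ := φ.contDiff
  have hφ0 : φ 0 ≠ 0 := (φ.pos_of_mem_ball (by simp [φ.rOut_pos])).ne'
  have h0p : |(0 : ℝ)| ^ (2 * p) = 0 := by rw [abs_zero, Real.zero_rpow (by linarith)]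
  have hsupp : HasCompactSupport φ := φ.hasCompactSupport
  set A : ℝ := ∫ x, φ x ^ 2 with hA
  set B : ℝ := ∫ x, |φ x| ^ (2 * p) with hB
  have hA0 : 0 < A :=
    (hφ.continuous.pow 2).integral_pos_of_hasCompactSupport_nonneg_nonzero
      (hsupp.comp_left (g := fun t : ℝ => t ^ 2) (by simp)) (fun x => sq_nonneg _)
      (x := 0) (pow_ne_zero 2 hφ0)
  have hB0 : 0 < B :=
    (hφ.continuous.abs.rpow_const fun _ => Or.inr (by linarith)
      ).integral_pos_of_hasCompactSupport_nonneg_nonzero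
      (hsupp.comp_left (g := fun t : ℝ => |t| ^ (2 * p)) h0p)
      (fun x => Real.rpow_nonneg (abs_nonneg _) _)
      (x := 0) (Real.rpow_pos_of_pos (abs_pos.2 hφ0) _).ne'
  set a : ℝ := (A / B) ^ (1 / (2 * p - 2)) with ha
  have ha0 : 0 < a := Real.rpow_pos_of_pos (div_pos hA0 hB0) _
  have ha' : a ^ (2 * p) * B = a ^ 2 * A := by
    have : a ^ (2 * p - 2) = A / B := by
      rw [ha, ← Real.rpow_mul (by positivity), one_div_mul_cancel (by linarith), Real.rpow_one]
    rw [show 2 * p = (2 * p - 2) + (2 : ℕ) by push_cast; ring, Real.rpow_add_natCast ha0.ne', this]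
    field_simp
  set b : ℝ := (a ^ 2 * A) ^ (1 / (d : ℝ)) with hb
  have hb0 : 0 < b := Real.rpow_pos_of_pos (by positivity) _
  have hb' : b ^ d = a ^ 2 * A := by
    rw [hb, one_div, Real.rpow_inv_natCast_pow (by positivity) hd]
  obtain ⟨ψ, hψ_eq⟩ : ∃ ψ : (Fin d → ℝ) → ℝ, ψ = fun x => a * φ (b • x) := ⟨_, rfl⟩
  have hψ : ContDiff ℝ 1 ψ := by
    rw [hψ_eq]
    exact contDiff_const.mul (hφ.comp (contDiff_const_smul b))
  have hψs : HasCompactSupport ψ := by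
    rw [hψ_eq]
    exact (hsupp.comp_smul hb0.ne').mul_left
  have hscale (g : (Fin d → ℝ) → ℝ) : ∫ x, g (b • x) = (b ^ d)⁻¹ * ∫ x, g x := by
    rw [Measure.integral_comp_smul, Module.finrank_fin_fun, abs_of_nonneg (by positivity),
      smul_eq_mul]
  refine ⟨(1 / 2) * ∫ x, gradNormSq ψ x, ψ, hψ.differentiable one_ne_zero, ?_, ?_, ?_, ?_, ?_, rfl⟩
  · have hs : HasCompactSupport fun x => ψ x ^ 2 :=
      hψs.comp_left (g := fun t : ℝ => t ^ 2) (by simp)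
    exact (hψ.continuous.pow 2).integrable_of_hasCompactSupport hs
  · have hc : Continuous (fderiv ℝ ψ) := hψ.continuous_fderiv one_ne_zero
    have hs : HasCompactSupport (gradNormSq ψ) := (hψs.fderiv ℝ).comp_left
      (g := fun L : (Fin d → ℝ) →L[ℝ] ℝ => ∑ i, (L (Pi.single i 1)) ^ 2) (by simp)
    have hgc : Continuous (gradNormSq ψ) := by unfold gradNormSq; fun_prop
    exact hgc.integrable_of_hasCompactSupport hs
  · exact (hψ.continuous.abs.rpow_const fun _ => Or.inr (by linarith)
      ).integrable_of_hasCompactSupport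
      (hψs.comp_left (g := fun t : ℝ => |t| ^ (2 * p)) h0p)
  · simp only [hψ_eq, mul_pow]
    rw [integral_const_mul, hscale (fun x => φ x ^ 2), hb', ← hA]
    field_simp
  · simp only [hψ_eq, abs_mul, abs_of_pos ha0, Real.mul_rpow ha0.le (abs_nonneg _)]
    rw [integral_const_mul, hscale (fun x => |φ x| ^ (2 * p)), hb', ← hB, ← ha']
    field_simp

/-- For `d ≥ 3` and `1 < p ≤ d/(d-2)` (with conjugate exponent `q`, so `d ≤ 2q`),
the constant `χ_{d,p}` is strictly positive. -/
theorem chi_pos (d : ℕ) (hd : 3 ≤ d) (p q : ℝ) (hp : 1 < p)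
    (hpd : p ≤ (d : ℝ) / ((d : ℝ) - 2)) (hq : 1 / p + 1 / q = 1) :
    0 < sInf (chiSet d p) := by
  have hpos : 0 < 1 / (8 * (p + 1) ^ 2) := by positivity
  exact hpos.trans_le (le_csInf (chiSet_nonempty (by omega) hp)
    fun E hE => le_of_mem_chiSet hd hp hpd hE)
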